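/- Let a = 2/√3. There exists a unique b > 0 such that ∫₀^{a/b} √((1 − (1/4)·(a − 2bu)²)/(a·u − b·u²)) du = √3; explicitly, this b equals L(1)²/3 where L(1) = ∫₀^{a} √((1 − (1/4)·(a − 2u)²)/(a·u − u²)) du. -/

import Mathlib

/-!
The substitution `v = b u` turns the length integral for `b > 0` into `genLength b = genLength 1 / √b`
(`genLength_scale`), so `genLength b = √3` forces `b = (genLength 1)² / 3`. Conversely this value is
positive and solves the equation as soon as `genLength 1 > 0`. With `a = 2/√3`, the integrand for
`b = 1` is `√((2/3 + u(a - u)) / (u(a - u)))`: it is positive on `(0, a)`, and since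
`1/(u(a - u)) = (1/u + 1/(a - u))/a` it is dominated by `1 + u^(-1/2) + (a - u)^(-1/2)`, hence
integrable (`profile_integrable`), which gives `genLength_one_pos`.
-/

open intervalIntegral

/-- The length of the generating curve of the momentum profile `φ u = a·u - b·u²`
with `a = 2/√3`. -/
noncomputable def genLength (b : ℝ) : ℝ :=
  ∫ u in (0 : ℝ)..(2 / Real.sqrt 3) / b,
    Real.sqrt ((1 - (1 / 4) * (2 / Real.sqrt 3 - 2 * b * u) ^ 2) /
      ((2 / Real.sqrt 3) * u - b * u ^ 2))

/-- The integrand defining `genLength 1`. -/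
noncomputable def profile (u : ℝ) : ℝ :=
  Real.sqrt ((1 - (1 / 4) * (2 / Real.sqrt 3 - 2 * u) ^ 2) / ((2 / Real.sqrt 3) * u - u ^ 2))

lemma genLength_scale {b : ℝ} (hb : 0 < b) : genLength b = genLength 1 / Real.sqrt b := by
  have h1 : genLength 1 = ∫ u in (0 : ℝ)..2 / Real.sqrt 3, profile u := by
    simp [genLength, profile]
  have h2 : genLength b
      = ∫ u in (0 : ℝ)..(2 / Real.sqrt 3) / b, Real.sqrt b * profile (b * u) := by
    unfold genLength profile
    congr 1
    ext u
    rw [← Real.sqrt_mul hb.le]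
    congr 1
    have h3 : 2 / Real.sqrt 3 * (b * u) - (b * u) ^ 2
        = b * (2 / Real.sqrt 3 * u - b * u ^ 2) := by ring
    rw [h3, ← mul_div_assoc, mul_div_mul_left _ _ hb.ne', mul_assoc]
  have h4 : b * (2 / Real.sqrt 3 / b) = 2 / Real.sqrt 3 := mul_div_cancel₀ _ hb.ne'
  rw [h2, intervalIntegral.integral_const_mul, intervalIntegral.integral_comp_mul_left _ hb.ne',
    mul_zero, h4, ← h1, smul_eq_mul]
  have hs := Real.sqrt_pos.2 hb
  have hq := Real.sq_sqrt hb.le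
  field_simp
  linear_combination genLength 1 * hq

/-- Partial fractions for the squared integrand; `1 - a²/4 = 2/3` because `a² = 4/3`. -/
lemma profile_radicand {u : ℝ} (h0 : 0 < u) (h1 : u < 2 / Real.sqrt 3) :
    (1 - (1 / 4) * (2 / Real.sqrt 3 - 2 * u) ^ 2) / ((2 / Real.sqrt 3) * u - u ^ 2)
      = 1 + (Real.sqrt 3 / 3) * (u⁻¹ + (2 / Real.sqrt 3 - u)⁻¹) := by
  have hs : 0 < Real.sqrt 3 := by positivity
  have ha : (2 / Real.sqrt 3) * Real.sqrt 3 = 2 := by field_simp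
  have hq : Real.sqrt 3 ^ 2 = 3 := Real.sq_sqrt (by norm_num)
  have ha2 : (2 / Real.sqrt 3) ^ 2 = 4 / 3 := by rw [div_pow, hq]; norm_num
  generalize 2 / Real.sqrt 3 = a at *
  have hd : 0 < a - u := sub_pos.2 h1
  have he : a * u - u ^ 2 = u * (a - u) := by ring
  rw [he]
  field_simp
  linear_combination (-3) * ha2 - 4 * ha

lemma profile_integrable :
    IntervalIntegrable profile MeasureTheory.volume 0 (2 / Real.sqrt 3) := by
  have hrp : IntervalIntegrable (fun u : ℝ => u ^ (-(1 / 2) : ℝ)) MeasureTheory.volume 0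
      (2 / Real.sqrt 3) := intervalIntegral.intervalIntegrable_rpow' (by norm_num)
  have hrp' : IntervalIntegrable (fun u : ℝ => (2 / Real.sqrt 3 - u) ^ (-(1 / 2) : ℝ))
      MeasureTheory.volume 0 (2 / Real.sqrt 3) := by
    simpa using (hrp.comp_sub_left (2 / Real.sqrt 3)).symm
  have hg := ((intervalIntegrable_const (μ := MeasureTheory.volume) (a := (0 : ℝ))
    (b := 2 / Real.sqrt 3) (c := (1 : ℝ))).add hrp).add hrp'
  have hm : Measurable profile := by unfold profile; fun_prop
  refine hg.mono_fun hm.aestronglyMeasurable ?_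
  have ha : 0 < 2 / Real.sqrt 3 := by positivity
  rw [Set.uIoc_of_le ha.le]
  refine (MeasureTheory.ae_restrict_iff' measurableSet_Ioc).2 (Filter.Eventually.of_forall ?_)
  rintro u ⟨h0, h1⟩
  beta_reduce
  rcases h1.lt_or_eq with h1 | h1
  · have hd : 0 < 2 / Real.sqrt 3 - u := sub_pos.2 h1
    have hx : 0 ≤ u ^ (-(1 / 2) : ℝ) := by positivity
    have hy : 0 ≤ (2 / Real.sqrt 3 - u) ^ (-(1 / 2) : ℝ) := by positivity
    have hx2 : (u ^ (-(1 / 2) : ℝ)) ^ 2 = u⁻¹ := by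
      rw [← Real.rpow_natCast, ← Real.rpow_mul h0.le]; norm_num [Real.rpow_neg_one]
    have hy2 : ((2 / Real.sqrt 3 - u) ^ (-(1 / 2) : ℝ)) ^ 2 = (2 / Real.sqrt 3 - u)⁻¹ := by
      rw [← Real.rpow_natCast, ← Real.rpow_mul hd.le]; norm_num [Real.rpow_neg_one]
    have hs : Real.sqrt 3 / 3 ≤ 1 := by
      have : Real.sqrt 3 ≤ 3 := Real.sqrt_le_iff.2 (by norm_num)
      linarith
    refine le_trans ?_ (le_abs_self _)
    rw [profile, Real.norm_of_nonneg (Real.sqrt_nonneg _), profile_radicand h0 h1, ← hx2, ← hy2]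
    refine Real.sqrt_le_iff.2 ⟨by positivity, ?_⟩
    generalize u ^ (-(1 / 2) : ℝ) = x at *
    generalize (2 / Real.sqrt 3 - u) ^ (-(1 / 2) : ℝ) = y at *
    have := mul_le_mul_of_nonneg_right hs (add_nonneg (sq_nonneg x) (sq_nonneg y))
    nlinarith [mul_nonneg hx hy]
  · -- At the right endpoint the denominator vanishes, so the integrand takes the value `0`.
    have : profile u = 0 := by
      have h2 : 2 / Real.sqrt 3 * u - u ^ 2 = 0 := by rw [← h1]; ring
      rw [profile, h2, div_zero, Real.sqrt_zero]
    rw [this, norm_zero]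
    exact norm_nonneg _

lemma genLength_one_pos : 0 < genLength 1 := by
  have h1 : genLength 1 = ∫ u in (0 : ℝ)..2 / Real.sqrt 3, profile u := by
    simp [genLength, profile]
  rw [h1]
  refine intervalIntegral.intervalIntegral_pos_of_pos_on profile_integrable ?_ (by positivity)
  rintro u ⟨h0, h2⟩
  have hd : 0 < 2 / Real.sqrt 3 - u := sub_pos.2 h2
  rw [profile, profile_radicand h0 h2]
  positivity

/-- There is a unique `b > 0` such that the length of the generating curve equals `√3`;
explicitly, this `b` equals `L(1)²/3`. -/
theorem stmt_9 :
    ∀ b : ℝ, (0 < b ∧ genLength b = Real.sqrt 3) ↔ b = genLength 1 ^ 2 / 3 := by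
  intro b
  have hL := genLength_one_pos
  have h3 : Real.sqrt 3 ^ 2 = 3 := Real.sq_sqrt (by norm_num)
  constructor
  · rintro ⟨hb, h⟩
    rw [genLength_scale hb, div_eq_iff (Real.sqrt_pos.2 hb).ne'] at h
    rw [h, mul_pow, h3, Real.sq_sqrt hb.le]
    ring
  · intro h
    have hb : 0 < b := by rw [h]; positivity
    refine ⟨hb, ?_⟩
    have hsb : Real.sqrt b = genLength 1 / Real.sqrt 3 := by
      rw [h, Real.sqrt_div (sq_nonneg _), Real.sqrt_sq hL.le]
    rw [genLength_scale hb, hsb, div_div_cancel₀ hL.ne']
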